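/- Let f(z) = z + exp(−z). If z lies in the topological frontier of Ŝ and the orbit {f^n(z) : n ≥ 0} is bounded, then z is accessible from the interior of Ŝ: there exists a continuous path γ : [0,1) → interior(Ŝ) with γ(t) → z as t → 1. -/

import Mathlib

/-!
Let `S0` be the strip `|Im w| < π` without the real axis. On each of its two halves the hyperbolic
metric is `|dz| / |sin Im z|`, and `f` expands it strictly (`expand`); this is a second-order
Taylor inequality for `sin²`.

On `S0` the map `f` has two inverse branches, with values in the upper and in the lower half
strip: along a level curve `Im f = v` in the upper half strip, `Re f` is a strictly monotone
function of `Im z` taking every real value once (`Phi`), and the lower branch is the complex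
conjugate of the upper one. For a point `z` whose orbit stays in `S0`, composing along the orbit
the branches that recover it gives the inverse branch `G n z` of `f^n` taking `f^n z` to `z`.

A bounded orbit that stays in `|Im| ≤ π` keeps a positive distance from the lines
`Im ∈ {-π, 0, π}`: a point of its closure on such a line would have a bounded orbit, while on these
lines `f` moves the real part monotonically to infinity (`sin_ne_zero_of_bounded`). So the orbit
lies in a compact set `T M c`. On `T M c` the branches `G n z` do not expand the hyperbolic metric,
hence their values stay in a larger compact set, where the expansion of `f` is uniform; therefore
`G n z` converges to `z` uniformly and geometrically fast on `T M c ∩ H (f^n z)` (`contraction`).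

Finally, there is a point `w` in the interior of `Shat`, in the upper half strip, which can be
joined inside these two sets to both of the points of the upper half strip that `f` maps to `w` and
to its conjugate (`exists_base`). Reflecting these two paths when needed and pulling them back by
the `G n z` gives consecutive arcs in the interior of `Shat`. Their concatenation tends to `z` by
the contraction estimate.
-/

open Complex Filter Topology Set

noncomputable def f : ℂ → ℂ := fun z => z + Complex.exp (-z)

def Shat : Set ℂ := {z : ℂ | ∀ n : ℕ, |((f^[n]) z).im| ≤ Real.pi}


lemma f_re (z : ℂ) : (f z).re = z.re + Real.exp (-z.re) * Real.cos z.im := by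
  simp [f, Complex.exp_re]

lemma f_im (z : ℂ) : (f z).im = z.im - Real.exp (-z.re) * Real.sin z.im := by
  simp [f, Complex.exp_im]; ring

lemma f_hasStrictDerivAt (z : ℂ) : HasStrictDerivAt f (1 - Complex.exp (-z)) z := by
  have h := (hasStrictDerivAt_id z).add ((hasStrictDerivAt_id z).neg.cexp)
  exact h.congr_deriv (by simp; ring)

lemma f_continuous : Continuous f := by unfold f; fun_prop

lemma f_conj (z : ℂ) : f ((starRingEnd ℂ) z) = (starRingEnd ℂ) (f z) := by
  simp [f, ← Complex.exp_conj]

/-! ### Expansion of the hyperbolic metric -/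

/-- The Taylor expansion of `s ↦ sin² (y - s)` to first order, with remainder less than `s²`
because the second derivative is at most `2`. -/
lemma sin_sq_taylor_pos (y s : ℝ) (hs : 0 < s) :
    Real.sin (y - s) ^ 2 < Real.sin y ^ 2 - 2 * s * Real.sin y * Real.cos y + s ^ 2 := by
  have hd : ∀ t : ℝ, HasDerivAt (fun s : ℝ => Real.sin y ^ 2 - 2 * s * Real.sin y * Real.cos y
      + s ^ 2 - Real.sin (y - s) ^ 2)
      (2 * t - 2 * (Real.sin t * Real.cos (2 * y - t))) t := by
    intro t
    have h1 : HasDerivAt (fun s : ℝ => Real.sin (y - s) ^ 2)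
        (2 * Real.sin (y - t) * (Real.cos (y - t) * (-1))) t := by
      have := (((hasDerivAt_id t).const_sub y).sin).pow 2
      exact this.congr_deriv (by simp)
    have h2 : HasDerivAt (fun s : ℝ => Real.sin y ^ 2 - 2 * s * Real.sin y * Real.cos y + s ^ 2)
        (2 * t - 2 * Real.sin y * Real.cos y) t := by
      have := (((((hasDerivAt_id t).const_mul 2).mul_const (Real.sin y)).mul_const
        (Real.cos y)).const_sub (Real.sin y ^ 2)).add ((hasDerivAt_id t).pow 2)
      exact this.congr_deriv (by simp; ring)
    refine (h2.sub h1).congr_deriv ?_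
    have e1 : 2 * Real.sin y * Real.cos y = Real.sin ((2 * y - t) + t) := by
      rw [← Real.sin_two_mul]; congr 1; ring
    have e2 : 2 * Real.sin (y - t) * Real.cos (y - t) = Real.sin ((2 * y - t) - t) := by
      rw [← Real.sin_two_mul]; congr 1; ring
    rw [Real.sin_add] at e1
    rw [Real.sin_sub (2 * y - t)] at e2
    linarith
  have hm := strictMonoOn_of_deriv_pos (convex_Ici (0 : ℝ))
    (fun t _ => (hd t).continuousAt.continuousWithinAt) (by
      intro t ht
      rw [interior_Ici] at ht
      have ht : 0 < t := ht
      rw [(hd t).deriv]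
      have h1 : |Real.sin t| < t := by
        have := Real.abs_sin_lt_abs ht.ne'
        rwa [abs_of_pos ht] at this
      have h2 : |Real.sin t * Real.cos (2 * y - t)| ≤ |Real.sin t| := by
        rw [abs_mul]
        exact mul_le_of_le_one_right (abs_nonneg _) (Real.abs_cos_le_one _)
      have := le_abs_self (Real.sin t * Real.cos (2 * y - t))
      linarith)
  have := hm (show (0 : ℝ) ∈ Ici 0 by simp) (show s ∈ Ici 0 from hs.le) hs
  simp at this
  linarith

lemma sin_sq_taylor (y s : ℝ) (hs : s ≠ 0) :
    Real.sin (y - s) ^ 2 < Real.sin y ^ 2 - 2 * s * Real.sin y * Real.cos y + s ^ 2 := by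
  rcases lt_or_gt_of_ne hs with h | h
  · have := sin_sq_taylor_pos (-y) (-s) (by linarith)
    rw [show -y - -s = -(y - s) by ring] at this
    simp only [Real.sin_neg, Real.cos_neg] at this
    linarith
  · exact sin_sq_taylor_pos y s h

lemma normSq_deriv (z : ℂ) : ‖1 - Complex.exp (-z)‖ ^ 2 =
    (1 - Real.exp (-z.re) * Real.cos z.im) ^ 2 + (Real.exp (-z.re) * Real.sin z.im) ^ 2 := by
  rw [← Complex.normSq_eq_norm_sq, Complex.normSq_apply]
  simp [Complex.exp_re, Complex.exp_im]; ring

/-- `f` strictly expands the metric `|dz| / |sin Im z|`. With `s = e^{-x} sin y` the squared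
inequality is `sin_sq_taylor`. -/
lemma expand (z : ℂ) (hz : Real.sin z.im ≠ 0) :
    |Real.sin (f z).im| < ‖1 - Complex.exp (-z)‖ * |Real.sin z.im| := by
  apply lt_of_pow_lt_pow_left₀ 2 (by positivity)
  rw [mul_pow, sq_abs, sq_abs, normSq_deriv, f_im]
  have := sin_sq_taylor z.im (Real.exp (-z.re) * Real.sin z.im)
    (mul_ne_zero (Real.exp_pos _).ne' hz)
  refine this.trans_eq ?_
  linear_combination (Real.exp (-z.re) * Real.sin z.im) ^ 2 * (- Real.sin_sq_add_cos_sq z.im)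

lemma deriv_ne_zero' (z : ℂ) (hz : Real.sin z.im ≠ 0) : 1 - Complex.exp (-z) ≠ 0 := by
  intro h
  have := expand z hz
  rw [h] at this
  simp at this
  linarith [abs_nonneg (Real.sin (f z).im)]

/-! ### The inverse branch with values in the upper half strip -/

/-- The real part of `f` along the level curve `Im f = v` in the upper half strip, parametrized by
`y = Im z`. On that curve `e^{-x} sin y = y - v`, that is `x = log (sin y) - log (y - v)`. -/
noncomputable def Phi (v y : ℝ) : ℝ :=
  Real.log (Real.sin y) - Real.log (y - v) + (y - v) * Real.cos y / Real.sin y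

lemma Phi_hasDerivAt {v y : ℝ} (h0 : 0 < y) (hv : v < y) (hp : y < Real.pi) :
    HasDerivAt (Phi v) (-((Real.sin y - (y - v) * Real.cos y) ^ 2
      + ((y - v) * Real.sin y) ^ 2) / ((y - v) * Real.sin y ^ 2)) y := by
  have hs : 0 < Real.sin y := Real.sin_pos_of_pos_of_lt_pi h0 hp
  have hs' := hs.ne'
  have hv' : y - v ≠ 0 := by linarith
  have h1 := (Real.hasDerivAt_sin y).log hs.ne'
  have h2 := ((hasDerivAt_id y).sub_const v).log hv'
  have h3 := (((hasDerivAt_id y).sub_const v).mul (Real.hasDerivAt_cos y)).div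
    (Real.hasDerivAt_sin y) hs.ne'
  refine ((h1.sub h2).add h3).congr_deriv ?_
  simp only [id, Pi.mul_apply]
  field_simp
  ring

lemma Phi_strictAnti (v : ℝ) : StrictAntiOn (Phi v) (Ioo (max v 0) Real.pi) := by
  have key : ∀ y ∈ Ioo (max v 0) Real.pi, 0 < y ∧ v < y ∧ y < Real.pi := fun y hy =>
    ⟨(le_max_right _ _).trans_lt hy.1, (le_max_left _ _).trans_lt hy.1, hy.2⟩
  refine strictAntiOn_of_deriv_neg (convex_Ioo _ _) ?_ ?_
  · intro y hy
    obtain ⟨h0, hv, hp⟩ := key y hy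
    exact (Phi_hasDerivAt h0 hv hp).continuousAt.continuousWithinAt
  · intro y hy
    rw [interior_Ioo] at hy
    obtain ⟨h0, hv, hp⟩ := key y hy
    rw [(Phi_hasDerivAt h0 hv hp).deriv]
    have hs : 0 < Real.sin y := Real.sin_pos_of_pos_of_lt_pi h0 hp
    have : 0 < y - v := by linarith
    apply div_neg_of_neg_of_pos
    · have : 0 < ((y - v) * Real.sin y) ^ 2 := by positivity
      nlinarith [sq_nonneg (Real.sin y - (y - v) * Real.cos y)]
    · positivity

lemma Phi_tendsto_pi {v : ℝ} (hv : v < Real.pi) :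
    Tendsto (Phi v) (𝓝[<] Real.pi) atBot := by
  have hsin : Tendsto Real.sin (𝓝[<] Real.pi) (𝓝[>] 0) := by
    refine tendsto_nhdsWithin_iff.2 ⟨?_, ?_⟩
    · have := (Real.continuous_sin.tendsto Real.pi).mono_left
        (nhdsWithin_le_nhds (s := Iio Real.pi))
      rwa [Real.sin_pi] at this
    · filter_upwards [Ioo_mem_nhdsLT Real.pi_pos] with y hy
      exact Real.sin_pos_of_pos_of_lt_pi hy.1 hy.2
  have h1 : Tendsto (fun y => Real.log (Real.sin y)) (𝓝[<] Real.pi) atBot :=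
    Real.tendsto_log_nhdsGT_zero.comp hsin
  have h2 : Tendsto (fun y => - Real.log (y - v)) (𝓝[<] Real.pi)
      (𝓝 (- Real.log (Real.pi - v))) := by
    have : ContinuousAt (fun y => - Real.log (y - v)) Real.pi :=
      ((continuousAt_id.sub continuousAt_const).log (by simp; linarith)).neg
    exact this.tendsto.mono_left nhdsWithin_le_nhds
  have h3 : Tendsto (fun y => (y - v) * Real.cos y * (Real.sin y)⁻¹) (𝓝[<] Real.pi) atBot := by
    have : Tendsto (fun y => (y - v) * Real.cos y) (𝓝[<] Real.pi)
        (𝓝 ((Real.pi - v) * Real.cos Real.pi)) :=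
      (Continuous.tendsto (by fun_prop) _).mono_left nhdsWithin_le_nhds
    exact this.neg_mul_atTop (by simp; linarith) (tendsto_inv_nhdsGT_zero.comp hsin)
  have := (h1.atBot_add h2).atBot_add_atBot h3
  refine this.congr fun y => ?_
  simp only [Phi]; ring

lemma Phi_tendsto_left {v : ℝ} (hv0 : v ≠ 0) (hv : v < Real.pi) :
    Tendsto (Phi v) (𝓝[>] (max v 0)) atTop := by
  rcases lt_or_gt_of_ne hv0 with h | h
  · rw [max_eq_right h.le]
    have hsin : Tendsto Real.sin (𝓝[>] 0) (𝓝[>] 0) := by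
      refine tendsto_nhdsWithin_iff.2 ⟨?_, ?_⟩
      · have := (Real.continuous_sin.tendsto 0).mono_left (nhdsWithin_le_nhds (s := Ioi 0))
        rwa [Real.sin_zero] at this
      · filter_upwards [Ioo_mem_nhdsGT Real.pi_pos] with y hy
        exact Real.sin_pos_of_pos_of_lt_pi hy.1 hy.2
    have h2 : Tendsto (fun y => - Real.log (y - v)) (𝓝[>] 0) (𝓝 (- Real.log (0 - v))) := by
      have : ContinuousAt (fun y => - Real.log (y - v)) 0 :=
        ((continuousAt_id.sub continuousAt_const).log (by simp; linarith)).neg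
      exact this.tendsto.mono_left nhdsWithin_le_nhds
    have h1 : Tendsto (fun y => Real.sin y * Real.log (Real.sin y) + (y - v) * Real.cos y)
        (𝓝[>] 0) (𝓝 (Real.sin 0 * Real.log (Real.sin 0) + (0 - v) * Real.cos 0)) :=
      (Continuous.tendsto ((Real.continuous_mul_log.comp Real.continuous_sin).add
        (by fun_prop)) _).mono_left nhdsWithin_le_nhds
    have h3 := h1.pos_mul_atTop (by simp; linarith) (tendsto_inv_nhdsGT_zero.comp hsin)
    refine (h3.atTop_add h2).congr' ?_
    filter_upwards [Ioo_mem_nhdsGT Real.pi_pos] with y hy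
    have := (Real.sin_pos_of_pos_of_lt_pi hy.1 hy.2).ne'
    simp only [Phi, Function.comp]
    field_simp
    ring
  · rw [max_eq_left h.le]
    have hs := (Real.sin_pos_of_pos_of_lt_pi h hv).ne'
    have h1 : Tendsto (fun y => Real.log (Real.sin y) + (y - v) * Real.cos y / Real.sin y)
        (𝓝[>] v) (𝓝 (Real.log (Real.sin v) + (v - v) * Real.cos v / Real.sin v)) := by
      have : ContinuousAt (fun y => Real.log (Real.sin y) + (y - v) * Real.cos y / Real.sin y) v :=
        (Real.continuous_sin.continuousAt.log hs).add
          (ContinuousAt.div (by fun_prop) Real.continuous_sin.continuousAt hs)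
      exact this.tendsto.mono_left nhdsWithin_le_nhds
    have h2 : Tendsto (fun y => y - v) (𝓝[>] v) (𝓝[>] 0) := by
      refine tendsto_nhdsWithin_iff.2 ⟨?_, ?_⟩
      · have := (Continuous.tendsto (f := fun y : ℝ => y - v) (by fun_prop) v).mono_left
          (nhdsWithin_le_nhds (s := Ioi v))
        simpa using this
      · filter_upwards [self_mem_nhdsWithin] with y hy
        exact sub_pos.2 (mem_Ioi.1 hy)
    have h3 := tendsto_neg_atBot_atTop.comp (Real.tendsto_log_nhdsGT_zero.comp h2)
    refine (h3.atTop_add h1).congr fun y => ?_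
    simp only [Phi, Function.comp]; ring

/-- The open strip `|Im w| < π` with the real axis removed. -/
def S0 : Set ℂ := {w | 0 < |w.im| ∧ |w.im| < Real.pi}

/-- The half strip `0 < Im w < π`. -/
def Sp : Set ℂ := {w | 0 < w.im ∧ w.im < Real.pi}

/-- A point of the upper half strip is determined by its imaginary part and `Im f`, and `Phi` is
the corresponding value of `Re f`. -/
lemma Phi_of_Sp {z : ℂ} (hz : z ∈ Sp) :
    z.im ∈ Ioi (max (f z).im 0) ∧ z.re = Real.log (Real.sin z.im) - Real.log (z.im - (f z).im) ∧
    Phi (f z).im z.im = (f z).re := by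
  have hs : 0 < Real.sin z.im := Real.sin_pos_of_pos_of_lt_pi hz.1 hz.2
  have he := Real.exp_pos (-z.re)
  have h1 : z.im - (f z).im = Real.exp (-z.re) * Real.sin z.im := by rw [f_im]; ring
  have h2 : z.re = Real.log (Real.sin z.im) - Real.log (z.im - (f z).im) := by
    rw [h1, Real.log_mul he.ne' hs.ne', Real.log_exp]; ring
  refine ⟨max_lt ?_ hz.1, h2, ?_⟩
  · have := mul_pos he hs
    linarith
  · rw [Phi, ← h2, h1, f_re]
    field_simp

lemma f_injOn_Sp : InjOn f Sp := by
  intro z hz w hw h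
  obtain ⟨a1, a2, a3⟩ := Phi_of_Sp hz
  obtain ⟨b1, b2, b3⟩ := Phi_of_Sp hw
  rw [h] at a1 a2 a3
  have : z.im = w.im := (Phi_strictAnti (f w).im).injOn ⟨a1, hz.2⟩ ⟨b1, hw.2⟩ (a3.trans b3.symm)
  apply Complex.ext _ this
  rw [a2, b2, this]

lemma exists_preimage {w : ℂ} (hw : w ∈ S0) : ∃ z ∈ Sp, f z = w := by
  have hv0 : w.im ≠ 0 := abs_pos.1 hw.1
  have hv : w.im < Real.pi := (abs_lt.1 hw.2).2
  have hm : max w.im 0 < Real.pi := max_lt hv Real.pi_pos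
  obtain ⟨y, hy, hyu⟩ := isPreconnected_Ioo.intermediate_value_Iii
    (le_principal_iff.2 (Ioo_mem_nhdsLT hm)) (le_principal_iff.2 (Ioo_mem_nhdsGT hm))
    (f := Phi w.im) (fun y hy => (Phi_hasDerivAt ((le_max_right _ _).trans_lt hy.1)
      ((le_max_left _ _).trans_lt hy.1) hy.2).continuousAt.continuousWithinAt)
    (Phi_tendsto_pi hv) (Phi_tendsto_left hv0 hv) (mem_univ w.re)
  have h0 : 0 < y := (le_max_right _ _).trans_lt hy.1
  have h1 : 0 < y - w.im := sub_pos.2 ((le_max_left _ _).trans_lt hy.1)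
  have hs : 0 < Real.sin y := Real.sin_pos_of_pos_of_lt_pi h0 hy.2
  have he : Real.exp (-(Real.log (Real.sin y) - Real.log (y - w.im))) = (y - w.im) / Real.sin y := by
    rw [neg_sub, Real.exp_sub, Real.exp_log h1, Real.exp_log hs]
  refine ⟨⟨Real.log (Real.sin y) - Real.log (y - w.im), y⟩, ⟨h0, hy.2⟩, Complex.ext ?_ ?_⟩
  · rw [f_re, he, ← hyu, Phi]; ring
  · rw [f_im, he]; field_simp; ring

open Classical in
/-- The inverse branch of `f` on `S0` with values in the upper half strip (`0` off `S0`). -/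
noncomputable def g (w : ℂ) : ℂ := if h : w ∈ S0 then (exists_preimage h).choose else 0

lemma g_mem {w : ℂ} (hw : w ∈ S0) : g w ∈ Sp := by
  rw [g, dif_pos hw]; exact (exists_preimage hw).choose_spec.1

lemma f_g {w : ℂ} (hw : w ∈ S0) : f (g w) = w := by
  rw [g, dif_pos hw]; exact (exists_preimage hw).choose_spec.2

lemma g_f {z : ℂ} (hz : z ∈ Sp) (hf : f z ∈ S0) : g (f z) = z :=
  f_injOn_Sp (g_mem hf) hz (f_g hf)

lemma isOpen_S0 : IsOpen S0 := by
  have h : IsOpen ({w : ℂ | 0 < |w.im|} ∩ {w : ℂ | |w.im| < Real.pi}) :=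
    (isOpen_lt (by fun_prop) (by fun_prop)).inter (isOpen_lt (by fun_prop) (by fun_prop))
  exact h

lemma isOpen_Sp : IsOpen Sp := by
  have h : IsOpen ({w : ℂ | 0 < w.im} ∩ {w : ℂ | w.im < Real.pi}) :=
    (isOpen_lt (by fun_prop) (by fun_prop)).inter (isOpen_lt (by fun_prop) (by fun_prop))
  exact h

lemma Sp_subset_S0 : Sp ⊆ S0 := fun z hz => by
  rw [S0, mem_ofPred_eq, abs_of_pos hz.1]; exact hz

lemma sin_ne_zero_of_S0 {z : ℂ} (hz : z ∈ S0) : Real.sin z.im ≠ 0 := by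
  rw [Ne, Real.sin_eq_zero_iff_of_lt_of_lt (abs_lt.1 hz.2).1 (abs_lt.1 hz.2).2]
  exact abs_pos.1 hz.1

/-- By injectivity of `f` on `Sp`, near `w` the branch `g` agrees with the local inverse of `f`
at `g w`. -/
lemma g_hasDerivAt {w : ℂ} (hw : w ∈ S0) :
    HasDerivAt g (1 - Complex.exp (-(g w)))⁻¹ w := by
  have hne := deriv_ne_zero' (g w) (sin_ne_zero_of_S0 (Sp_subset_S0 (g_mem hw)))
  have hd := f_hasStrictDerivAt (g w)
  have hloc := hd.to_localInverse hne
  have hr := hd.eventually_right_inverse hne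
  have h0 : hd.localInverse _ _ _ hne (f (g w)) = g w :=
    HasStrictFDerivAt.localInverse_apply_image _
  have hc := hloc.hasDerivAt.continuousAt
  have hmem : ∀ᶠ x in 𝓝 (f (g w)), hd.localInverse _ _ _ hne x ∈ Sp := by
    apply hc.eventually_mem
    rw [h0]
    exact isOpen_Sp.mem_nhds (g_mem hw)
  rw [f_g hw] at hr hmem hloc
  refine hloc.hasDerivAt.congr_of_eventuallyEq ?_
  filter_upwards [hr, hmem, isOpen_S0.mem_nhds hw] with x h1 h2 h3
  exact f_injOn_Sp (g_mem h3) h2 ((f_g h3).trans h1.symm)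

/-! ### Iterated inverse branches -/

open scoped ComplexConjugate

/-- The half of the strip `|Im w| < π` (upper or lower) on the same side of `ℝ` as `z`. -/
def H (z : ℂ) : Set ℂ := {w | 0 < z.im * w.im ∧ |w.im| < Real.pi}

/-- The inverse branch of `f` with values in `H z`. -/
noncomputable def br (z w : ℂ) : ℂ := if 0 < z.im then g w else conj (g (conj w))

lemma H_subset_S0 (z : ℂ) : H z ⊆ S0 := fun _ hw =>
  ⟨abs_pos.2 (right_ne_zero_of_mul hw.1.ne'), hw.2⟩

lemma mem_H_self {z : ℂ} (hz : z ∈ S0) : z ∈ H z :=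
  ⟨mul_self_pos.2 (abs_pos.1 hz.1), hz.2⟩

lemma conj_mem_S0 {w : ℂ} (hw : w ∈ S0) : conj w ∈ S0 := by
  simpa [S0] using hw

lemma br_mem {z w : ℂ} (hz : z ∈ S0) (hw : w ∈ S0) : br z w ∈ H z := by
  unfold br
  split_ifs with h
  · have := g_mem hw
    exact ⟨mul_pos h this.1, (Sp_subset_S0 this).2⟩
  · have := g_mem (conj_mem_S0 hw)
    have hz' : z.im < 0 := lt_of_le_of_ne (not_lt.1 h) (abs_pos.1 hz.1)
    refine ⟨?_, ?_⟩
    · rw [Complex.conj_im]; nlinarith [this.1]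
    · rw [Complex.conj_im, abs_neg]; exact (Sp_subset_S0 this).2

lemma f_br (z : ℂ) {w : ℂ} (hw : w ∈ S0) : f (br z w) = w := by
  unfold br
  split_ifs with h
  · exact f_g hw
  · rw [f_conj, f_g (conj_mem_S0 hw), Complex.conj_conj]

lemma br_f {z : ℂ} (hz : z ∈ S0) (hf : f z ∈ S0) : br z (f z) = z := by
  unfold br
  split_ifs with h
  · exact g_f ⟨h, (abs_lt.1 hz.2).2⟩ hf
  · have hz' : z.im < 0 := lt_of_le_of_ne (not_lt.1 h) (abs_pos.1 hz.1)
    rw [← f_conj, g_f, Complex.conj_conj]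
    · exact ⟨by simpa using hz', by rw [Complex.conj_im]; linarith [(abs_lt.1 hz.2).1]⟩
    · rw [f_conj]; exact conj_mem_S0 hf

lemma br_hasDerivAt (z : ℂ) {w : ℂ} (hw : w ∈ S0) :
    HasDerivAt (br z) (1 - Complex.exp (-(br z w)))⁻¹ w := by
  by_cases h : 0 < z.im
  · have e : br z = g := by funext w; simp [br, h]
    rw [e]; exact g_hasDerivAt hw
  · have e : br z = conj ∘ g ∘ conj := by funext w; simp [br, h]
    rw [e]
    have := (g_hasDerivAt (conj_mem_S0 hw)).conj_conj
    rw [Complex.conj_conj] at this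
    refine this.congr_deriv ?_
    simp [← Complex.exp_conj]

/-- The inverse branch of `f^n` sending `f^n z` to `z`: the composition of the branches `br`
along the orbit of `z`. -/
noncomputable def G : ℕ → ℂ → ℂ → ℂ
  | 0, _, w => w
  | n + 1, z, w => br z (G n (f z) w)

section Orbit

variable {O : Set ℂ}

lemma G_mem_S0 (hO : MapsTo f O O) (hS : O ⊆ S0) (n : ℕ) : ∀ z ∈ O, ∀ w ∈ S0, G n z w ∈ S0 := by
  induction n with
  | zero => exact fun z _ w hw => hw
  | succ n ih => exact fun z hz w hw => H_subset_S0 _ (br_mem (hS hz) (ih _ (hO hz) w hw))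

lemma G_mem_H (hO : MapsTo f O O) (hS : O ⊆ S0) (n : ℕ) :
    ∀ z ∈ O, ∀ w ∈ H (f^[n] z), G n z w ∈ H z := by
  cases n with
  | zero => exact fun z _ w hw => hw
  | succ n =>
    exact fun z hz w hw => br_mem (hS hz) (G_mem_S0 hO hS n _ (hO hz) w (H_subset_S0 _ hw))

lemma G_self (hO : MapsTo f O O) (hS : O ⊆ S0) (n : ℕ) : ∀ z ∈ O, G n z (f^[n] z) = z := by
  induction n with
  | zero => exact fun z _ => rfl
  | succ n ih =>
    intro z hz
    rw [Function.iterate_succ_apply, G, ih _ (hO hz), br_f (hS hz) (hS (hO hz))]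

lemma G_succ (n : ℕ) : ∀ z w, G (n + 1) z w = G n z (br (f^[n] z) w) := by
  induction n with
  | zero => exact fun z w => rfl
  | succ n ih =>
    intro z w
    rw [G, ih, G, Function.iterate_succ_apply]

/-- If `f` expands the metric `|dz| / |sin Im z|` by at least `1 / lam` on `N`, and the branches map
`T` into `N`, then `G n z` contracts it by `lam ^ n`. It is used with `lam = 1` and `N = S0`, and
with `lam < 1` and `N` compact. -/
lemma G_deriv (hO : MapsTo f O O) (hS : O ⊆ S0)
    {T N : Set ℂ} {lam : ℝ} (hl : 0 ≤ lam) (hTS : T ⊆ S0)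
    (hN : ∀ u ∈ N, |Real.sin (f u).im| ≤ lam * (‖1 - Complex.exp (-u)‖ * |Real.sin u.im|))
    (hT : ∀ n, ∀ z ∈ O, ∀ w ∈ T ∩ H (f^[n] z), G n z w ∈ N) (n : ℕ) :
    ∀ z ∈ O, ∀ w ∈ T ∩ H (f^[n] z), ∃ a, HasDerivAt (G n z) a w ∧
      ‖a‖ * |Real.sin w.im| ≤ lam ^ n * |Real.sin (G n z w).im| := by
  induction n with
  | zero =>
    intro z hz w hw
    exact ⟨1, hasDerivAt_id w, by simp [G]⟩
  | succ n ih =>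
    intro z hz w hw
    obtain ⟨a, ha, hle⟩ := ih (f z) (hO hz) w hw
    have hu := G_mem_S0 hO hS n _ (hO hz) w (hTS hw.1)
    have hb := br_hasDerivAt z hu
    refine ⟨_, hb.comp w ha, ?_⟩
    have hNN := hN _ (hT (n + 1) z hz w hw)
    rw [G, f_br z hu] at hNN
    have hne := deriv_ne_zero' (br z (G n (f z) w))
      (sin_ne_zero_of_S0 (H_subset_S0 _ (br_mem (hS hz) hu)))
    have hpos := norm_pos_iff.2 hne
    rw [G, norm_mul, norm_inv, mul_assoc, inv_mul_le_iff₀ hpos]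
    calc ‖a‖ * |Real.sin w.im| ≤ lam ^ n * |Real.sin (G n (f z) w).im| := hle
      _ ≤ lam ^ n * (lam * (‖1 - Complex.exp (-br z (G n (f z) w))‖ *
        |Real.sin (br z (G n (f z) w)).im|)) := by gcongr
      _ = _ := by ring

end Orbit

/-! ### Uniform contraction -/

/-- A compact part of the strip, bounded away from the lines `Im w ∈ {-π, 0, π}`. -/
def T (M c : ℝ) : Set ℂ := {w | |w.re| ≤ M ∧ |w.im| ≤ Real.pi ∧ c ≤ |Real.sin w.im|}

lemma T_subset_S0 {M c : ℝ} (hc : 0 < c) : T M c ⊆ S0 := by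
  rintro w ⟨-, h2, h3⟩
  have h4 : Real.sin w.im ≠ 0 := abs_pos.1 (hc.trans_le h3)
  refine ⟨abs_pos.2 fun h => h4 (by rw [h, Real.sin_zero]), lt_of_le_of_ne h2 fun h => h4 ?_⟩
  rcases eq_or_eq_neg_of_abs_eq h with h | h <;> simp [h]

lemma isCompact_T (M c : ℝ) : IsCompact (T M c) := by
  refine Metric.isCompact_of_isClosed_isBounded ?_ ?_
  · have : IsClosed ({w : ℂ | |w.re| ≤ M} ∩ ({w : ℂ | |w.im| ≤ Real.pi} ∩
        {w : ℂ | c ≤ |Real.sin w.im|})) :=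
      (isClosed_le (by fun_prop) (by fun_prop)).inter
        ((isClosed_le (by fun_prop) (by fun_prop)).inter
        (isClosed_le (by fun_prop) ((Real.continuous_sin.comp Complex.continuous_im).abs)))
    exact this
  · refine (isBounded_iff_forall_norm_le).2 ⟨M + Real.pi, fun w hw => ?_⟩
    have := Complex.norm_le_abs_re_add_abs_im w
    linarith [hw.1, hw.2.1]

/-- On compact sets avoiding the lines `Im w ∈ {-π, 0, π}` the expansion of `f` is uniform. -/
lemma exists_lam {M c : ℝ} (hc : 0 < c) : ∃ lam : ℝ, 0 ≤ lam ∧ lam < 1 ∧ ∀ u ∈ T M c,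
    |Real.sin (f u).im| ≤ lam * (‖1 - Complex.exp (-u)‖ * |Real.sin u.im|) := by
  rcases (T M c).eq_empty_or_nonempty with h | h
  · exact ⟨0, le_rfl, one_pos, by simp [h]⟩
  have hpos : ∀ u ∈ T M c, 0 < ‖1 - Complex.exp (-u)‖ * |Real.sin u.im| := fun u hu =>
    (abs_nonneg _).trans_lt (expand u (sin_ne_zero_of_S0 (T_subset_S0 hc hu)))
  have hcont : ContinuousOn (fun u : ℂ => |Real.sin (f u).im| /
      (‖1 - Complex.exp (-u)‖ * |Real.sin u.im|)) (T M c) := by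
    refine ContinuousOn.div ?_ ?_ fun u hu => (hpos u hu).ne'
    · exact ((Real.continuous_sin.comp (Complex.continuous_im.comp f_continuous)).abs).continuousOn
    · exact (((continuous_const.sub (Complex.continuous_exp.comp continuous_neg)).norm).mul
        ((Real.continuous_sin.comp Complex.continuous_im).abs)).continuousOn
  obtain ⟨u, hu, hmax⟩ := (isCompact_T M c).exists_isMaxOn h hcont
  refine ⟨_, by positivity, (div_lt_one (hpos u hu)).2
    (expand u (sin_ne_zero_of_S0 (T_subset_S0 hc hu))), fun v hv => ?_⟩
  exact (div_le_iff₀ (hpos v hv)).1 (hmax hv)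

/-- Convexity comes from the concavity of `sin` on `[0, π]`. -/
lemma convex_T_inter_H {M c : ℝ} {p : ℂ} (hp : p ∈ S0) : Convex ℝ (T M c ∩ H p) := by
  rintro x ⟨⟨hx1, -, hx3⟩, hx4, hx5⟩ y ⟨⟨hy1, -, hy3⟩, hy4, hy5⟩ s t hs ht hst
  have hre : (s • x + t • y).re = s • x.re + t • y.re := by simp
  have him : (s • x + t • y).im = s • x.im + t • y.im := by simp
  have h1 := (convex_Icc (-M) M) (abs_le.1 hx1) (abs_le.1 hy1) hs ht hst
  have hc := strictConcaveOn_sin_Icc.concaveOn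
  rcases lt_or_gt_of_ne (abs_pos.1 hp.1) with h | h
  · have hx : -x.im ∈ Ioo 0 Real.pi := ⟨by nlinarith, by linarith [(abs_lt.1 hx5).1]⟩
    have hy : -y.im ∈ Ioo 0 Real.pi := ⟨by nlinarith, by linarith [(abs_lt.1 hy5).1]⟩
    have h2 := (convex_Ioo 0 Real.pi) hx hy hs ht hst
    have h3 := hc.2 (Ioo_subset_Icc_self hx) (Ioo_subset_Icc_self hy) hs ht hst
    have sx := Real.sin_pos_of_pos_of_lt_pi hx.1 hx.2
    have sy := Real.sin_pos_of_pos_of_lt_pi hy.1 hy.2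
    have ss := Real.sin_pos_of_pos_of_lt_pi h2.1 h2.2
    rw [← abs_neg, ← Real.sin_neg, abs_of_pos sx] at hx3
    rw [← abs_neg, ← Real.sin_neg, abs_of_pos sy] at hy3
    rw [show s • -x.im + t • -y.im = -(s • x.im + t • y.im) by simp; ring, ← him] at h2 h3 ss
    have h4 : |(s • x + t • y).im| < Real.pi := by
      rw [← abs_neg, abs_of_pos h2.1]; exact h2.2
    refine ⟨⟨by rw [hre]; exact abs_le.2 h1, h4.le, ?_⟩, by nlinarith [h2.1], h4⟩
    rw [← abs_neg, ← Real.sin_neg, abs_of_pos ss]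
    simp only [smul_eq_mul] at h3
    nlinarith
  · have hx : x.im ∈ Ioo 0 Real.pi := ⟨by nlinarith, (abs_lt.1 hx5).2⟩
    have hy : y.im ∈ Ioo 0 Real.pi := ⟨by nlinarith, (abs_lt.1 hy5).2⟩
    have h2 := (convex_Ioo 0 Real.pi) hx hy hs ht hst
    have h3 := hc.2 (Ioo_subset_Icc_self hx) (Ioo_subset_Icc_self hy) hs ht hst
    have sx := Real.sin_pos_of_pos_of_lt_pi hx.1 hx.2
    have sy := Real.sin_pos_of_pos_of_lt_pi hy.1 hy.2
    have ss := Real.sin_pos_of_pos_of_lt_pi h2.1 h2.2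
    rw [abs_of_pos sx] at hx3
    rw [abs_of_pos sy] at hy3
    rw [← him] at h2 h3 ss
    have h4 : |(s • x + t • y).im| < Real.pi := by rw [abs_of_pos h2.1]; exact h2.2
    refine ⟨⟨by rw [hre]; exact abs_le.2 h1, h4.le, ?_⟩, mul_pos h h2.1, h4⟩
    rw [abs_of_pos ss]
    simp only [smul_eq_mul] at h3
    nlinarith

lemma norm_sub_le_T {M c : ℝ} {w p : ℂ} (hw : w ∈ T M c) (hp : p ∈ T M c) :
    ‖w - p‖ ≤ 2 * M + 2 * Real.pi := by
  have := Complex.norm_le_abs_re_add_abs_im (w - p)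
  have h1 := abs_sub w.re p.re
  have h2 := abs_sub w.im p.im
  simp only [Complex.sub_re, Complex.sub_im] at this
  linarith [hw.1, hw.2.1, hp.1, hp.2.1]

/-- Along a forward invariant set `O` lying in a compact `T M c`, the inverse branches of `f^n`
converge to their base points uniformly and at a geometric rate on `T M c`. -/
lemma contraction {O : Set ℂ} (hO : MapsTo f O O) {M c : ℝ} (hc : 0 < c) (hOT : O ⊆ T M c) :
    ∃ C lam : ℝ, 0 ≤ lam ∧ lam < 1 ∧ ∀ n, ∀ z ∈ O, ∀ w ∈ T M c ∩ H (f^[n] z),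
      ‖G n z w - z‖ ≤ C * lam ^ n := by
  have hS : O ⊆ S0 := hOT.trans (T_subset_S0 hc)
  have hit : ∀ n, ∀ z ∈ O, f^[n] z ∈ O := fun n z hz => hO.iterate n hz
  set D : ℝ := c⁻¹ * (2 * M + 2 * Real.pi) with hD
  -- Without compactness the branches are still nonexpanding.
  have weak : ∀ n, ∀ z ∈ O, ∀ w ∈ S0 ∩ H (f^[n] z), ∃ a, HasDerivAt (G n z) a w ∧
      ‖a‖ * |Real.sin w.im| ≤ |Real.sin (G n z w).im| := by
    have := G_deriv hO hS (T := S0) (N := S0) (lam := 1) zero_le_one subset_rfl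
      (fun u hu => by rw [one_mul]; exact (expand u (sin_ne_zero_of_S0 hu)).le)
      (fun n z hz w hw => G_mem_S0 hO hS n z hz w hw.1)
    simpa using this
  -- A derivative bound on the convex set `T M c ∩ H (f^[n] z)` bounds the distance to
  -- `z = G n z (f^[n] z)`.
  have mv : ∀ (A : ℝ) n, ∀ z ∈ O, ∀ w ∈ T M c ∩ H (f^[n] z),
      (∀ u ∈ T M c ∩ H (f^[n] z), ∃ a, HasDerivAt (G n z) a u ∧ ‖a‖ ≤ A) →
      ‖G n z w - z‖ ≤ A * (2 * M + 2 * Real.pi) := by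
    intro A n z hz w hw h
    have hp := hit n z hz
    have hpm : f^[n] z ∈ T M c ∩ H (f^[n] z) := ⟨hOT hp, mem_H_self (hS hp)⟩
    have h0 : 0 ≤ A := by
      obtain ⟨a, -, ha⟩ := h _ hpm
      exact (norm_nonneg a).trans ha
    choose! d hd1 hd2 using h
    have := (convex_T_inter_H (M := M) (c := c) (hS hp)).norm_image_sub_le_of_norm_hasDerivWithin_le
      (fun u hu => (hd1 u hu).hasDerivWithinAt) hd2 hpm hw
    rw [G_self hO hS n z hz] at this
    exact this.trans (mul_le_mul_of_nonneg_left (norm_sub_le_T hw.1 hpm.1) h0)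
  -- Nonexpansion keeps the values of the branches in a compact set independent of `n`.
  have bd : ∀ n, ∀ z ∈ O, ∀ w ∈ T M c ∩ H (f^[n] z), G n z w ∈ T (M + D) (c * Real.exp (-D)) := by
    intro n z hz w hw
    have hp := hit n z hz
    have hpm : f^[n] z ∈ T M c ∩ H (f^[n] z) := ⟨hOT hp, mem_H_self (hS hp)⟩
    have h1 : ‖G n z w - z‖ ≤ D := by
      refine mv c⁻¹ n z hz w hw fun u hu => ?_
      obtain ⟨a, ha, hle⟩ := weak n z hz u ⟨T_subset_S0 hc hu.1, hu.2⟩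
      refine ⟨a, ha, ?_⟩
      rw [← one_div, le_div_iff₀ hc]
      exact (mul_le_mul_of_nonneg_left hu.1.2.2 (norm_nonneg _)).trans
        (hle.trans (Real.abs_sin_le_one _))
    refine ⟨?_, ?_, ?_⟩
    · have h2 := Complex.abs_re_le_norm (G n z w - z)
      have h3 := abs_add_le z.re (G n z w - z).re
      rw [Complex.sub_re, add_sub_cancel] at h3
      rw [Complex.sub_re] at h2
      linarith [(hOT hz).1]
    · exact (G_mem_S0 hO hS n z hz w (T_subset_S0 hc hw.1)).2.le
    -- The function `log |sin Im|` is `1`-Lipschitz for the metric `|dz| / |sin Im z|`, so it changes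
    -- by at most `D` along the image of the segment from `f^[n] z` to `w`. As `Real.log` ignores
    -- signs, no absolute value is needed in its argument.
    · set p := f^[n] z with hpdef
      set L : ℝ → ℂ := fun t => p + (t : ℂ) * (w - p) with hL
      have hseg : ∀ t ∈ Icc (0 : ℝ) 1, L t ∈ T M c ∩ H p := by
        intro t ht
        have := (convex_T_inter_H (M := M) (c := c) (hS hp)) hpm hw (sub_nonneg.2 ht.2) ht.1 (by ring)
        convert this using 1
        simp [hL]; ring
      have key : ∀ t ∈ Icc (0 : ℝ) 1, ∃ d : ℝ,
          HasDerivWithinAt (fun t : ℝ => Real.log (Real.sin (G n z (L t)).im)) d (Icc 0 1) t ∧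
          ‖d‖ ≤ D := by
        intro t ht
        have hu := hseg t ht
        obtain ⟨a, ha, hle⟩ := weak n z hz (L t) ⟨T_subset_S0 hc hu.1, hu.2⟩
        have hGs := sin_ne_zero_of_S0 (G_mem_S0 hO hS n z hz (L t) (T_subset_S0 hc hu.1))
        have hLd : HasDerivAt L (w - p) t := by
          have := ((Complex.ofRealCLM.hasDerivAt (x := t)).mul_const (w - p)).const_add p
          exact this.congr_deriv (by simp)
        have h2 : HasDerivAt (fun t : ℝ => G n z (L t)) (a * (w - p)) t :=
          ha.comp_of_eq (h₂ := G n z) t hLd rfl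
        have h3 : HasDerivAt (fun t : ℝ => (G n z (L t)).im) (a * (w - p)).im t :=
          Complex.imCLM.hasFDerivAt.comp_hasDerivAt t h2
        refine ⟨_, (h3.sin.log hGs).hasDerivWithinAt, ?_⟩
        rw [Real.norm_eq_abs, abs_div, div_le_iff₀ (abs_pos.2 hGs), abs_mul]
        have e1 : |(a * (w - p)).im| ≤ ‖a‖ * (2 * M + 2 * Real.pi) :=
          (Complex.abs_im_le_norm _).trans (by
            rw [norm_mul]
            exact mul_le_mul_of_nonneg_left (norm_sub_le_T hw.1 hpm.1) (norm_nonneg _))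
        have e2 : ‖a‖ * c ≤ |Real.sin (G n z (L t)).im| :=
          (mul_le_mul_of_nonneg_left hu.1.2.2 (norm_nonneg _)).trans hle
        have e0 : 0 ≤ 2 * M + 2 * Real.pi := (norm_nonneg _).trans (norm_sub_le_T hw.1 hpm.1)
        calc |Real.cos (G n z (L t)).im| * |(a * (w - p)).im|
            ≤ 1 * (‖a‖ * (2 * M + 2 * Real.pi)) := by
              gcongr
              exact Real.abs_cos_le_one _
          _ = (c⁻¹ * (2 * M + 2 * Real.pi)) * (‖a‖ * c) := by field_simp
          _ ≤ D * |Real.sin (G n z (L t)).im| := by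
              rw [hD]; gcongr
      choose! d hd1 hd2 using key
      have hfin := norm_image_sub_le_of_norm_deriv_le_segment_01' hd1
        (fun t ht => hd2 t (Ico_subset_Icc_self ht))
      have hL1 : L 1 = w := by simp [hL]
      have hL0 : L 0 = p := by simp [hL]
      simp only [hL1, hL0] at hfin
      rw [hpdef, G_self hO hS n z hz, Real.norm_eq_abs] at hfin
      have hz0 : 0 < |Real.sin z.im| := abs_pos.2 (sin_ne_zero_of_S0 (hS hz))
      have hG0 : 0 < |Real.sin (G n z w).im| := abs_pos.2 (sin_ne_zero_of_S0
        (G_mem_S0 hO hS n z hz w (T_subset_S0 hc hw.1)))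
      rw [← Real.log_abs (Real.sin z.im), ← Real.log_abs (Real.sin (G n z w).im)] at hfin
      have h5 := (abs_le.1 hfin).1
      have h6 : Real.log c ≤ Real.log |Real.sin z.im| := Real.log_le_log hc (hOT hz).2.2
      rw [← Real.log_le_log_iff (by positivity) hG0, Real.log_mul hc.ne' (Real.exp_pos _).ne',
        Real.log_exp]
      linarith
  obtain ⟨lam, hl0, hl1, hlam⟩ := exists_lam (M := M + D) (c := c * Real.exp (-D)) (by positivity)
  refine ⟨c⁻¹ * (2 * M + 2 * Real.pi), lam, hl0, hl1, fun n z hz w hw => ?_⟩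
  have := mv (c⁻¹ * lam ^ n) n z hz w hw fun u hu => by
    obtain ⟨a, ha, hle⟩ := G_deriv hO hS hl0 (T_subset_S0 hc) hlam bd n z hz u hu
    refine ⟨a, ha, ?_⟩
    rw [le_inv_mul_iff₀ hc]
    calc c * ‖a‖ ≤ ‖a‖ * |Real.sin u.im| := by
          rw [mul_comm]; exact mul_le_mul_of_nonneg_left hu.1.2.2 (norm_nonneg _)
      _ ≤ lam ^ n * |Real.sin (G n z u).im| := hle
      _ ≤ lam ^ n * 1 := by gcongr; exact Real.abs_sin_le_one _
      _ = lam ^ n := mul_one _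
  linarith

/-! ### The interior of `Shat` and the base paths -/

/-- A forward invariant half strip contained in the interior of `Shat`. -/
def Q : Set ℂ := {z | 0 < z.re ∧ |z.im| < Real.pi / 2}

lemma isOpen_Q : IsOpen Q := by
  have h : IsOpen ({w : ℂ | 0 < w.re} ∩ {w : ℂ | |w.im| < Real.pi / 2}) :=
    (isOpen_lt (by fun_prop) (by fun_prop)).inter (isOpen_lt (by fun_prop) (by fun_prop))
  exact h

lemma f_mapsTo_Q : MapsTo f Q Q := by
  rintro z ⟨h1, h2⟩
  have he : Real.exp (-z.re) < 1 := Real.exp_lt_one_iff.2 (by linarith)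
  have he0 := Real.exp_pos (-z.re)
  have hy := abs_lt.1 h2
  refine ⟨?_, ?_⟩
  · rw [f_re]
    have := mul_nonneg he0.le (Real.cos_pos_of_mem_Ioo ⟨hy.1, hy.2⟩).le
    linarith
  · rw [f_im, abs_lt]
    rcases le_total 0 z.im with h | h
    · have a1 := Real.sin_le h
      have a2 := Real.sin_nonneg_of_nonneg_of_le_pi h (by linarith [Real.pi_pos])
      constructor <;> nlinarith
    · have a1 := Real.sin_le (neg_nonneg.2 h)
      have a2 := Real.sin_nonneg_of_nonneg_of_le_pi (neg_nonneg.2 h) (by linarith [Real.pi_pos])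
      rw [Real.sin_neg] at a1 a2
      constructor <;> nlinarith

lemma Q_subset : Q ⊆ interior Shat := by
  refine interior_maximal (fun z hz n => ?_) isOpen_Q
  have := (f_mapsTo_Q.iterate n hz).2
  linarith [Real.pi_pos]

/-- Preimages of interior points inside the open strip are interior points. -/
lemma mem_interior_of_f {z : ℂ} (hz : |z.im| < Real.pi) (hf : f z ∈ interior Shat) :
    z ∈ interior Shat := by
  have ho : IsOpen ({w : ℂ | |w.im| < Real.pi} ∩ f ⁻¹' interior Shat) :=
    (isOpen_lt (by fun_prop) (by fun_prop)).inter (isOpen_interior.preimage f_continuous)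
  refine interior_maximal ?_ ho ⟨hz, hf⟩
  rintro w ⟨h1, h2⟩ n
  cases n with
  | zero => exact h1.le
  | succ n => rw [Function.iterate_succ_apply]; exact interior_subset h2 n

lemma conj_mem_interior {z : ℂ} (hz : z ∈ interior Shat) : conj z ∈ interior Shat := by
  have ho : IsOpen ((fun w : ℂ => conj w) ⁻¹' interior Shat) :=
    isOpen_interior.preimage Complex.continuous_conj
  refine interior_maximal ?_ ho (by simpa using hz)
  intro w hw n
  have h1 : Function.Semiconj (fun w : ℂ => conj w) f f := fun w => (f_conj w).symm
  have h2 := (h1.iterate_right n) w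
  have h3 : |(f^[n] (conj w)).im| ≤ Real.pi := interior_subset hw n
  rw [← h2, Complex.conj_im, abs_neg] at h3
  exact h3

lemma g_continuousOn : ContinuousOn g S0 :=
  fun _ hw => (g_hasDerivAt hw).continuousAt.continuousWithinAt

lemma convex_Q : Convex ℝ Q := by
  rintro x ⟨hx1, hx2⟩ y ⟨hy1, hy2⟩ s t hs ht hst
  have h1 := (convex_Ioi (0 : ℝ)) hx1 hy1 hs ht hst
  have h2 := (convex_Ioo (-(Real.pi / 2)) (Real.pi / 2)) (abs_lt.1 hx2) (abs_lt.1 hy2) hs ht hst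
  exact ⟨by simpa using h1, by rw [abs_lt]; simpa using h2⟩

lemma g_image_subset {A : Set ℂ} (hA : A ⊆ Q) (hA0 : A ⊆ S0) :
    g '' A ⊆ interior Shat ∩ Sp := by
  rintro _ ⟨w, hw, rfl⟩
  have := g_mem (hA0 hw)
  exact ⟨mem_interior_of_f (Sp_subset_S0 this).2 (by rw [f_g (hA0 hw)]; exact Q_subset (hA hw)), this⟩

/-- A base point `w` joined, in the interior of `Shat` and in the upper half strip, to the points
`g w` and `g (conj w)` of that half strip mapped by `f` to `w` and to `conj w`. The second path
passes through `q`, where the image under `f` crosses the real axis. -/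
lemma exists_base : ∃ w ∈ Sp, JoinedIn (interior Shat ∩ Sp) w (g w) ∧
    JoinedIn (interior Shat ∩ Sp) w (g (conj w)) := by
  have pp := Real.pi_pos
  set Qp : Set ℂ := Q ∩ {w | 0 < w.im} with hQp
  set Qm : Set ℂ := Q ∩ {w | w.im < 0} with hQm
  have hQS : ∀ w ∈ Q, w.im ≠ 0 → w ∈ S0 := fun w hw h =>
    ⟨abs_pos.2 h, by linarith [hw.2]⟩
  have hp0 : Qp ⊆ S0 := fun w hw => hQS w hw.1 (mem_Ioi.1 hw.2).ne'
  have hm0 : Qm ⊆ S0 := fun w hw => hQS w hw.1 (mem_Iio.1 hw.2).ne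
  have hpSp : Qp ⊆ interior Shat ∩ Sp := fun w hw =>
    ⟨Q_subset hw.1, hw.2, (abs_lt.1 (hp0 hw).2).2⟩
  have cp : Convex ℝ Qp := convex_Q.inter (convex_halfSpace_im_gt 0)
  have cm : Convex ℝ Qm := convex_Q.inter (convex_halfSpace_im_lt 0)
  -- A point of `Qp` whose image is again in `Qp`.
  obtain ⟨p, hp, hfp⟩ : ∃ p ∈ Qp, f p ∈ Qp := by
    have h1 : (⟨1, 1⟩ : ℂ) ∈ Qp :=
      ⟨⟨one_pos, by simp; linarith [Real.pi_gt_three]⟩,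
        show (0 : ℝ) < 1 from one_pos⟩
    refine ⟨_, h1, f_mapsTo_Q h1.1, ?_⟩
    change 0 < (f ⟨1, 1⟩).im
    rw [f_im]
    have a1 := Real.sin_lt one_pos
    have a2 := Real.sin_nonneg_of_nonneg_of_le_pi zero_le_one (by linarith [Real.pi_gt_three])
    have a3 : Real.exp (-1) < 1 := Real.exp_lt_one_iff.2 (by norm_num)
    have a4 := Real.exp_pos (-1)
    simp only
    nlinarith
  -- A point `q` of the upper half strip with `f q` real and positive.
  have hs4 : 0 < Real.sin (Real.pi / 4) := Real.sin_pos_of_pos_of_lt_pi (by linarith) (by linarith)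
  set x0 : ℝ := -Real.log (Real.pi / 4 / Real.sin (Real.pi / 4)) with hx0
  have hex : Real.exp (-x0) * Real.sin (Real.pi / 4) = Real.pi / 4 := by
    rw [hx0, neg_neg, Real.exp_log (by positivity)]; field_simp
  have hcs : Real.cos (Real.pi / 4) = Real.sin (Real.pi / 4) := by
    rw [Real.cos_pi_div_four, Real.sin_pi_div_four]
  set q : ℂ := ⟨x0, Real.pi / 4⟩ with hq
  have hqm : q ∈ Sp ∩ f ⁻¹' Q := by
    refine ⟨⟨by simp only [hq]; linarith, by simp only [hq]; linarith⟩, ?_, ?_⟩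
    · rw [f_re, hq, hcs, hex, hx0]
      have a1 := Real.log_le_sub_one_of_pos
        (show 0 < Real.pi / 4 / Real.sin (Real.pi / 4) by positivity)
      have a2 : Real.pi / 4 / Real.sin (Real.pi / 4) < 1 + Real.pi / 4 := by
        rw [div_lt_iff₀ hs4, Real.sin_pi_div_four]
        have a3 : (1.4 : ℝ) < √2 := Real.lt_sqrt_of_sq_lt (by norm_num)
        nlinarith [Real.pi_lt_four]
      linarith
    · rw [f_im, hq, hex]; simp; linarith
  obtain ⟨r, hr, hball⟩ := Metric.isOpen_iff.1
    (isOpen_Sp.inter (isOpen_Q.preimage f_continuous)) q hqm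
  have hN : Metric.ball q r ⊆ interior Shat ∩ Sp := fun w hw =>
    ⟨mem_interior_of_f (Sp_subset_S0 (hball hw).1).2 (Q_subset (hball hw).2), (hball hw).1⟩
  have hab : ∀ e : ℝ, |e| < r → q + e ∈ Metric.ball q r := fun e he => by
    simpa using he
  have him : ∀ e : ℝ, (f (q + e)).im = Real.pi / 4 * (1 - Real.exp (-e)) := by
    intro e
    have e1 : (q + e).re = x0 + e := by simp [hq]
    have e2 : (q + e).im = Real.pi / 4 := by simp [hq]
    rw [f_im, e1, e2, neg_add, Real.exp_add]
    linear_combination (-Real.exp (-e)) * hex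
  have ha := hab (r / 2) (by rw [abs_of_pos] <;> linarith)
  have hb := hab (-(r / 2)) (by rw [abs_neg, abs_of_pos] <;> linarith)
  have hfa : f (q + (r / 2 : ℝ)) ∈ Qp := by
    refine ⟨(hball ha).2, ?_⟩
    change 0 < (f _).im
    rw [him]
    have : Real.exp (-(r / 2)) < 1 := Real.exp_lt_one_iff.2 (by linarith)
    apply mul_pos <;> linarith
  have hfb : f (q + (-(r / 2) : ℝ)) ∈ Qm := by
    refine ⟨(hball hb).2, ?_⟩
    change (f _).im < 0
    rw [him]
    have : 1 < Real.exp (-(-(r / 2))) := Real.one_lt_exp_iff.2 (by linarith)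
    apply mul_neg_of_pos_of_neg <;> linarith
  have hconj : conj (f p) ∈ Qm := by
    refine ⟨⟨by simpa using hfp.1.1, by simpa using hfp.1.2⟩, ?_⟩
    change (conj (f p)).im < 0
    rw [Complex.conj_im]
    have : 0 < (f p).im := hfp.2
    linarith
  have gp : g (f p) = p := g_f (hpSp hp).2 (hp0 hfp)
  have ga : g (f (q + (r / 2 : ℝ))) = _ := g_f (hball ha).1 (hp0 hfa)
  have gb : g (f (q + (-(r / 2) : ℝ))) = _ := g_f (hball hb).1 (hm0 hfb)
  have j1 : JoinedIn (interior Shat ∩ Sp) (f p) (g (f p)) := by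
    rw [gp]
    exact ((cp.isPathConnected ⟨p, hp⟩).joinedIn _ hfp _ hp).mono hpSp
  have j2 : JoinedIn (interior Shat ∩ Sp) (g (f p)) (q + (r / 2 : ℝ)) := by
    rw [← ga]
    exact (((cp.isPathConnected ⟨p, hp⟩).image' (g_continuousOn.mono hp0)).joinedIn _
      (mem_image_of_mem _ hfp) _ (mem_image_of_mem _ hfa)).mono
        (g_image_subset inter_subset_left hp0)
  have j3 : JoinedIn (interior Shat ∩ Sp) (q + (r / 2 : ℝ)) (q + (-(r / 2) : ℝ)) :=
    (((convex_ball q r).isPathConnected ⟨_, ha⟩).joinedIn _ ha _ hb).mono hN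
  have j4 : JoinedIn (interior Shat ∩ Sp) (q + (-(r / 2) : ℝ)) (g (conj (f p))) := by
    rw [← gb]
    exact (((cm.isPathConnected ⟨_, hconj⟩).image' (g_continuousOn.mono hm0)).joinedIn _
      (mem_image_of_mem _ hfb) _ (mem_image_of_mem _ hconj)).mono
        (g_image_subset inter_subset_left hm0)
  exact ⟨f p, (hpSp hfp).2, j1, ((j1.trans j2).trans j3).trans j4⟩

lemma T_mono {M M' c c' : ℝ} (hM : M ≤ M') (hc : c' ≤ c) : T M c ⊆ T M' c' :=
  fun _ hw => ⟨hw.1.trans hM, hw.2.1, hc.trans hw.2.2⟩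

lemma exists_T_of_compact {K : Set ℂ} (hK : IsCompact K) (him : ∀ w ∈ K, |w.im| ≤ Real.pi)
    (hs : ∀ w ∈ K, Real.sin w.im ≠ 0) : ∃ M c : ℝ, 0 < c ∧ K ⊆ T M c := by
  rcases K.eq_empty_or_nonempty with h | h
  · exact ⟨0, 1, one_pos, by simp [h]⟩
  obtain ⟨M, hM⟩ := isBounded_iff_forall_norm_le.1 hK.isBounded
  obtain ⟨u, hu, hmin⟩ := hK.exists_isMinOn h
    ((Real.continuous_sin.comp Complex.continuous_im).abs).continuousOn
  exact ⟨M, |Real.sin u.im|, abs_pos.2 (hs u hu), fun w hw =>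
    ⟨(Complex.abs_re_le_norm w).trans (hM w hw), him w hw, hmin hw⟩⟩

lemma conj_mem_T {M c : ℝ} {w : ℂ} (hw : w ∈ T M c) : conj w ∈ T M c := by
  simpa [T] using hw

/-- The paths of `exists_base` and their conjugates. Here `b z` is the base point or its conjugate,
whichever lies on the side of `z`, and all paths lie in a common compact set `T M c`. -/
lemma exists_base_paths : ∃ (b : ℂ → ℂ) (M c : ℝ), 0 < c ∧ ∀ z ∈ S0, ∀ z' ∈ S0, ∃ α : ℝ → ℂ,
    Continuous α ∧ α 0 = b z ∧ α 1 = br z (b z') ∧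
    ∀ t, α t ∈ interior Shat ∧ α t ∈ T M c ∩ H z := by
  obtain ⟨w, hw, j1, j2⟩ := exists_base
  obtain ⟨M, c, hc, hK⟩ := exists_T_of_compact (K := range j1.somePath ∪ range j2.somePath)
    ((isCompact_range j1.somePath.continuous).union (isCompact_range j2.somePath.continuous))
    (by
      rintro _ (⟨t, rfl⟩ | ⟨t, rfl⟩)
      · exact (Sp_subset_S0 (j1.somePath_mem t).2).2.le
      · exact (Sp_subset_S0 (j2.somePath_mem t).2).2.le)
    (by
      rintro _ (⟨t, rfl⟩ | ⟨t, rfl⟩)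
      · exact sin_ne_zero_of_S0 (Sp_subset_S0 (j1.somePath_mem t).2)
      · exact sin_ne_zero_of_S0 (Sp_subset_S0 (j2.somePath_mem t).2))
  have main : ∀ y, JoinedIn (interior Shat ∩ Sp) w y → (y = g w ∨ y = g (conj w)) →
      ∃ α : ℝ → ℂ, Continuous α ∧ α 0 = w ∧ α 1 = y ∧
      ∀ t, α t ∈ interior Shat ∩ Sp ∧ α t ∈ T M c := by
    rintro y - (rfl | rfl)
    · refine ⟨j1.somePath.extend, j1.somePath.continuous_extend, by simp, by simp, fun t => ?_⟩
      have : j1.somePath.extend t ∈ range j1.somePath := by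
        rw [← Path.extend_range]; exact mem_range_self t
      refine ⟨?_, hK (Or.inl this)⟩
      obtain ⟨s, hs⟩ := this
      rw [← hs]; exact j1.somePath_mem s
    · refine ⟨j2.somePath.extend, j2.somePath.continuous_extend, by simp, by simp, fun t => ?_⟩
      have : j2.somePath.extend t ∈ range j2.somePath := by
        rw [← Path.extend_range]; exact mem_range_self t
      refine ⟨?_, hK (Or.inr this)⟩
      obtain ⟨s, hs⟩ := this
      rw [← hs]; exact j2.somePath_mem s
  refine ⟨fun z => if 0 < z.im then w else conj w, M, c, hc, fun z hz z' hz' => ?_⟩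
  by_cases h : 0 < z.im
  · obtain ⟨α, h1, h2, h3, h4⟩ : ∃ α : ℝ → ℂ, Continuous α ∧ α 0 = w ∧
        α 1 = g (if 0 < z'.im then w else conj w) ∧
        ∀ t, α t ∈ interior Shat ∩ Sp ∧ α t ∈ T M c := by
      split_ifs
      · exact main _ j1 (Or.inl rfl)
      · exact main _ j2 (Or.inr rfl)
    refine ⟨α, h1, by simp [h, h2], by simp [br, h, h3], fun t => ?_⟩
    obtain ⟨⟨a1, a2⟩, a3⟩ := h4 t
    exact ⟨a1, a3, mul_pos h a2.1, (Sp_subset_S0 a2).2⟩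
  · obtain ⟨α, h1, h2, h3, h4⟩ : ∃ α : ℝ → ℂ, Continuous α ∧ α 0 = w ∧
        α 1 = g (conj (if 0 < z'.im then w else conj w)) ∧
        ∀ t, α t ∈ interior Shat ∩ Sp ∧ α t ∈ T M c := by
      split_ifs
      · exact main _ j2 (Or.inr rfl)
      · rw [Complex.conj_conj]; exact main _ j1 (Or.inl rfl)
    refine ⟨fun t => conj (α t), Complex.continuous_conj.comp h1, by simp [h, h2],
      by simp only [br, h, h3, if_false], fun t => ?_⟩
    obtain ⟨⟨a1, a2⟩, a3⟩ := h4 t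
    have hz' : z.im < 0 := lt_of_le_of_ne (not_lt.1 h) (abs_pos.1 hz.1)
    refine ⟨conj_mem_interior a1, conj_mem_T a3, ?_, ?_⟩
    · rw [Complex.conj_im]; nlinarith [a2.1]
    · rw [Complex.conj_im, abs_neg]; exact (Sp_subset_S0 a2).2

/-! ### Bounded orbits and the concatenated path -/

lemma isClosed_Shat : IsClosed Shat := by
  have : Shat = ⋂ n : ℕ, {z : ℂ | |((f^[n]) z).im| ≤ Real.pi} := by
    ext z; simp [Shat]
  rw [this]
  exact isClosed_iInter fun n => isClosed_le
    ((Complex.continuous_im.comp (f_continuous.iterate n)).abs) continuous_const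

/-- On the lines `Im p ∈ πℤ` the real part moves monotonically and without bound. -/
lemma sin_ne_zero_of_bounded {p : ℂ} {M : ℝ} (hM : ∀ n, ‖f^[n] p‖ ≤ M) : Real.sin p.im ≠ 0 := by
  intro hs
  have him : ∀ n, (f^[n] p).im = p.im := by
    intro n
    induction n with
    | zero => rfl
    | succ n ih => rw [Function.iterate_succ_apply', f_im, ih, hs]; ring
  have hcos : Real.cos p.im * Real.cos p.im = 1 := by
    have := Real.sin_sq_add_cos_sq p.im
    rw [hs] at this; linarith
  have hre : ∀ n, |(f^[n] p).re| ≤ M := fun n => (Complex.abs_re_le_norm _).trans (hM n)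
  have hinc : ∀ n : ℕ, Real.cos p.im * p.re + n * Real.exp (-M) ≤
      Real.cos p.im * (f^[n] p).re := by
    intro n
    induction n with
    | zero => simp
    | succ n ih =>
      rw [Function.iterate_succ_apply', f_re, him]
      have : Real.exp (-M) ≤ Real.exp (-(f^[n] p).re) :=
        Real.exp_le_exp.2 (by linarith [(abs_le.1 (hre n)).2])
      push_cast
      linear_combination ih + this - Real.exp (-(f^[n] p).re) * hcos
  obtain ⟨n, hn⟩ := exists_nat_gt ((2 * M) / Real.exp (-M))
  rw [div_lt_iff₀ (Real.exp_pos _)] at hn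
  have bd : ∀ k, |Real.cos p.im * (f^[k] p).re| ≤ M := fun k => by
    rw [abs_mul]
    exact (mul_le_of_le_one_left (abs_nonneg _) (Real.abs_cos_le_one _)).trans (hre k)
  have h0 := (abs_le.1 (bd 0)).1
  have h1 := (abs_le.1 (bd n)).2
  have h2 := hinc n
  rw [Function.iterate_zero, id] at h0
  linarith

/-- The closure of a bounded orbit is compact and consists of points with bounded orbit, so it
avoids the lines `Im w ∈ {-π, 0, π}`; compactness turns this into uniform constants. -/
lemma orbit_subset_T {z : ℂ} (hz : z ∈ Shat)
    (hb : Bornology.IsBounded (Set.range fun n : ℕ => (f^[n]) z)) :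
    ∃ M c : ℝ, 0 < c ∧ (range fun n : ℕ => (f^[n]) z) ⊆ T M c := by
  set O := range fun n : ℕ => (f^[n]) z with hO
  have hfO : MapsTo f O O := by
    rintro _ ⟨n, rfl⟩
    exact ⟨n + 1, Function.iterate_succ_apply' f n z⟩
  have hmaps : MapsTo f (closure O) (closure O) := hfO.closure f_continuous
  obtain ⟨M, hM⟩ := isBounded_iff_forall_norm_le.1 hb.closure
  have him : ∀ w ∈ closure O, |w.im| ≤ Real.pi := by
    have hcl : IsClosed {w : ℂ | |w.im| ≤ Real.pi} := isClosed_le (by fun_prop) (by fun_prop)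
    refine fun w hw => closure_minimal ?_ hcl hw
    rintro _ ⟨n, rfl⟩
    exact hz n
  obtain ⟨M', c, hc, hK⟩ := exists_T_of_compact
    (Metric.isCompact_of_isClosed_isBounded isClosed_closure hb.closure) him
    (fun w hw => sin_ne_zero_of_bounded fun n => hM _ (hmaps.iterate n hw))
  exact ⟨M', c, hc, subset_closure.trans hK⟩

/-- Paths `c n` on `[0, 1]` with matching end points, run one after the other on `[n, n + 1]`. -/
lemma continuousOn_concat (c : ℕ → ℝ → ℂ) (hc : ∀ n, Continuous (c n))
    (hj : ∀ n, c n 1 = c (n + 1) 0) :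
    ContinuousOn (fun s : ℝ => c ⌊s⌋₊ (s - ⌊s⌋₊)) (Ici 0) := by
  have piece : ∀ n : ℕ, ContinuousOn (fun s : ℝ => c ⌊s⌋₊ (s - ⌊s⌋₊)) (Icc (n : ℝ) (n + 1)) := by
    intro n
    have h : ContinuousOn (fun s : ℝ => c n (s - n)) (Icc (n : ℝ) (n + 1)) :=
      ((hc n).comp (by fun_prop)).continuousOn
    refine h.congr fun s hs => ?_
    rcases hs.2.eq_or_lt with e | e
    · have hf : ⌊s⌋₊ = n + 1 := by
        rw [e]; exact_mod_cast Nat.floor_natCast (R := ℝ) (n + 1)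
      simp only [hf]
      rw [e]
      push_cast
      rw [sub_self, add_sub_cancel_left, hj]
    · have hf : ⌊s⌋₊ = n := (Nat.floor_eq_iff (n.cast_nonneg.trans hs.1)).2 ⟨hs.1, e⟩
      simp only [hf]
  have upto : ∀ n : ℕ, ContinuousOn (fun s : ℝ => c ⌊s⌋₊ (s - ⌊s⌋₊)) (Icc (0 : ℝ) n) := by
    intro n
    induction n with
    | zero => simp
    | succ n ih =>
      have := ih.union_of_isClosed (piece n) isClosed_Icc isClosed_Icc
      rw [Icc_union_Icc_eq_Icc n.cast_nonneg (by linarith)] at this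
      exact_mod_cast this
  intro s hs
  obtain ⟨n, hn⟩ := exists_nat_gt s
  refine (upto n s ⟨hs, hn.le⟩).mono_of_mem_nhdsWithin ?_
  filter_upwards [self_mem_nhdsWithin, mem_nhdsWithin_of_mem_nhds (Iio_mem_nhds hn)] with x h1 h2
  exact ⟨h1, le_of_lt h2⟩

lemma G_mem_interior {O : Set ℂ} (hO : MapsTo f O O) (hS : O ⊆ S0) (n : ℕ) : ∀ z ∈ O, ∀ w ∈ S0,
    w ∈ interior Shat → G n z w ∈ interior Shat := by
  induction n with
  | zero => exact fun z _ w _ hw => hw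
  | succ n ih =>
    intro z hz w hw hwi
    have hu := G_mem_S0 hO hS n _ (hO hz) w hw
    refine mem_interior_of_f (br_mem (hS hz) hu).2 ?_
    rw [G, f_br z hu]
    exact ih _ (hO hz) w hw hwi

/-- points of the frontier of Ŝ with bounded orbit are accessible from the
interior of Ŝ. -/
theorem bounded_orbit_points_accessible
    (z : ℂ) (hz : z ∈ frontier Shat)
    (hb : Bornology.IsBounded (Set.range fun n : ℕ => (f^[n]) z)) :
    ∃ γ : ℝ → ℂ,
      ContinuousOn γ (Set.Ico (0 : ℝ) 1) ∧
      (∀ t ∈ Set.Ico (0 : ℝ) 1, γ t ∈ interior Shat) ∧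
      Tendsto γ (𝓝[Set.Ico (0 : ℝ) 1] 1) (𝓝 z) := by
  have hzS : z ∈ Shat := isClosed_Shat.frontier_subset hz
  obtain ⟨M1, c1, hc1, hO1⟩ := orbit_subset_T hzS hb
  obtain ⟨b, M2, c2, hc2, hpaths⟩ := exists_base_paths
  set O := range fun n : ℕ => (f^[n]) z with hOdef
  have hO : MapsTo f O O := by
    rintro _ ⟨n, rfl⟩
    exact ⟨n + 1, Function.iterate_succ_apply' f n z⟩
  have hS : O ⊆ S0 := hO1.trans (T_subset_S0 hc1)
  have hzO : ∀ n, f^[n] z ∈ O := fun n => mem_range_self n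
  have hz0 : z ∈ O := hzO 0
  obtain ⟨C, lam, hl0, hl1, hcon⟩ := contraction hO (M := max M1 M2) (lt_min hc1 hc2)
    (hO1.trans (T_mono (le_max_left _ _) (min_le_left _ _)))
  -- `α n` joins the base point beside `f^[n] z` to the preimage, beside `f^[n] z`, of the base
  -- point beside `f^[n + 1] z`; hence the pulled-back arcs `c n` match up.
  choose α hα using fun n : ℕ => hpaths _ (hS (hzO n)) _ (hS (hzO (n + 1)))
  set c : ℕ → ℝ → ℂ := fun n t => G n z (α n t) with hcdef
  have hmem : ∀ n t, α n t ∈ T (max M1 M2) (min c1 c2) ∩ H (f^[n] z) := fun n t =>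
    ⟨T_mono (le_max_right _ _) (min_le_right _ _) ((hα n).2.2.2 t).2.1, ((hα n).2.2.2 t).2.2⟩
  have hcc : ∀ n, Continuous (c n) := by
    intro n
    rw [continuous_iff_continuousAt]
    intro t
    have hSt := H_subset_S0 _ (hmem n t).2
    obtain ⟨a, ha, -⟩ := G_deriv hO hS (T := S0) (N := S0) (lam := 1) zero_le_one subset_rfl
      (fun u hu => by rw [one_mul]; exact (expand u (sin_ne_zero_of_S0 hu)).le)
      (fun n z hz w hw => G_mem_S0 hO hS n z hz w hw.1) n z hz0 (α n t) ⟨hSt, (hmem n t).2⟩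
    exact ha.continuousAt.comp (f := α n) (hα n).1.continuousAt
  have hj : ∀ n, c n 1 = c (n + 1) 0 := by
    intro n
    simp only [hcdef]
    rw [(hα n).2.2.1, (hα (n + 1)).2.1, G_succ]
  have mem_int : ∀ n t, c n t ∈ interior Shat := fun n t =>
    G_mem_interior hO hS n z hz0 _ (H_subset_S0 _ (hmem n t).2) ((hα n).2.2.2 t).1
  have hcont := continuousOn_concat c hcc hj
  refine ⟨fun t => c ⌊t / (1 - t)⌋₊ (t / (1 - t) - ⌊t / (1 - t)⌋₊), ?_, fun t _ => mem_int _ _, ?_⟩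
  · refine hcont.comp (t := Ici 0) (f := fun t : ℝ => t / (1 - t)) ?_ ?_
    · refine ContinuousOn.div (by fun_prop) (by fun_prop) fun t ht => ?_
      have := ht.2
      linarith
    · intro t ht
      exact div_nonneg ht.1 (by linarith [ht.2])
  · have htop : Tendsto (fun t : ℝ => t / (1 - t)) (𝓝[Ico (0 : ℝ) 1] 1) atTop := by
      have h1 : Tendsto (fun t : ℝ => 1 - t) (𝓝[Ico (0 : ℝ) 1] 1) (𝓝[>] 0) := by
        refine tendsto_nhdsWithin_iff.2 ⟨?_, ?_⟩
        · have := (Continuous.tendsto (f := fun t : ℝ => 1 - t) (by fun_prop) 1).mono_left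
            (nhdsWithin_le_nhds (s := Ico (0 : ℝ) 1))
          simpa using this
        · filter_upwards [self_mem_nhdsWithin] with t ht
          exact sub_pos.2 ht.2
      have h2 : Tendsto (fun t : ℝ => t) (𝓝[Ico (0 : ℝ) 1] 1) (𝓝 1) :=
        tendsto_id.mono_left nhdsWithin_le_nhds
      exact h2.pos_mul_atTop one_pos (tendsto_inv_nhdsGT_zero.comp h1)
    rw [tendsto_iff_norm_sub_tendsto_zero]
    have hlim : Tendsto (fun t : ℝ => C * lam ^ ⌊t / (1 - t)⌋₊) (𝓝[Ico (0 : ℝ) 1] 1) (𝓝 0) := by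
      have := ((tendsto_pow_atTop_nhds_zero_of_lt_one hl0 hl1).comp
        (tendsto_nat_floor_atTop.comp htop)).const_mul C
      simpa using this
    exact squeeze_zero (fun _ => norm_nonneg _)
      (fun t => hcon _ z hz0 _ (hmem _ _)) hlim
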